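/- Let V : [0,∞) → ℝ^{n×r} be piecewise continuous and almost everywhere bounded. The linear time-varying system x'(t) = −V(t)V(t)ᵀ x(t) is exponentially asymptotically stable, i.e., there exist γ₁, γ₂ > 0 such that every solution satisfies ‖x(t)‖ ≤ γ₁ e^{−γ₂(t−s)} ‖x(s)‖ for all t ≥ s ≥ 0, if and only if there exist positive constants α₁, α₂, δ such that α₁ I ≤ ∫_s^{s+δ} V(t)V(t)ᵀ dt ≤ α₂ I for all s ≥ 0 (inequalities in the positive semidefinite (Loewner) order). -/

import Mathlib

open MeasureTheory Finset Matrix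

/-!
Write `K = n r A² + 1`, so that `‖V(u)ᵀ y‖² ≤ K ‖y‖²` for almost every `u`. Everything rests on two
facts about a solution `x`, with `D = ∫ₛᵗ ‖V(u)ᵀ x(u)‖² du` the energy it dissipates on `[s,t]`:

* the energy identity `‖x(t)‖² = ‖x(s)‖² - 2 D` (`isSol_energy`);
* for each fixed vector `v`, `⟨x(t) - x(s), v⟩² ≤ D · ∫ₛᵗ ‖V(u)ᵀ v‖² du`
  (`isSol_cauchySchwarz`), where the last integral is the quadratic form of the Gramian at `v`.

If the Gramian over windows of length `δ` is at least `α₁ I`, the second fact with `v = x(u) - x(s)`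
gives `‖x(u) - x(s)‖² ≤ K δ D` on `[s, s+δ]`. Hence `α₁ ‖x(s)‖² ≤ (2 + 2 K² δ²) D`, and the energy
identity makes `‖x‖²` contract by a fixed factor over each window (`isSol_window`); iterating
yields exponential decay.

Conversely, exponential stability provides a `δ` over which every solution loses half its norm.
For any `v`, the solution with `x(s) = v` satisfies `⟨v - x(s+δ), v⟩ ≥ ‖v‖² / 2` and dissipates
`D ≤ ‖v‖² / 2`, so the second fact with this `v` shows that the Gramian is at least `I / 2`. The
upper Gramian bound `K δ` always holds. This direction needs a solution through every `(s, v)`,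
which is obtained from the contraction principle in a weighted sup norm
(`exists_global_solution`), as the coefficients are only piecewise continuous in time.
-/

/-- A function `f : [0,∞) → ℝ` is piecewise continuous: on every interval `[0,b]`
it is continuous except possibly at finitely many points. -/
def PiecewiseContinuous (f : ℝ → ℝ) : Prop :=
  ∀ b : ℝ, ∃ S : Finset ℝ, ContinuousOn f (Set.Icc 0 b \ (S : Set ℝ))

/-- The Euclidean norm of a vector in `ℝ^n`. -/
noncomputable def enorm' {n : ℕ} (v : Fin n → ℝ) : ℝ := Real.sqrt (∑ i, v i ^ 2)

/-! ### Existence of solutions -/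

/-- Global existence for an integral equation whose right-hand side is merely measurable in time,
and Lipschitz in space with value `0` at the origin. Banach's fixed point theorem is applied to
`y = x / w` in the space of bounded continuous functions, with weight
`w t = cosh (2 K (t - s))`. Since `∫ u in s..t, K * w u = sinh (2 K (t - s)) / 2` is at most
`w t / 2` in absolute value, the Picard map is a `1/2`-contraction on the whole line, both forward
and backward from time `s`. -/
lemma exists_global_solution {E : Type*} [NormedAddCommGroup E] [NormedSpace ℝ E]
    [CompleteSpace E] (f : ℝ → E → E) (K : ℝ) (hK : 0 < K) (hf0 : ∀ u, f u 0 = 0)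
    (hlip : ∀ᵐ u ∂(volume : Measure ℝ), ∀ y z, ‖f u y - f u z‖ ≤ K * ‖y - z‖)
    (hm : ∀ y : ℝ → E, Continuous y →
      AEStronglyMeasurable (fun u => f u (y u)) (volume : Measure ℝ)) (s : ℝ) (v : E) :
    ∃ x : ℝ → E, Continuous x ∧ ∀ t, x t = v + ∫ u in s..t, f u (x u) := by
  set w : ℝ → ℝ := fun t => Real.cosh (2 * K * (t - s)) with hw
  have hwc : Continuous w := by fun_prop
  have hw1 : ∀ t, 1 ≤ w t := fun t => Real.one_le_cosh _
  have hw0 : ∀ t, 0 < w t := fun t => Real.cosh_pos _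
  have hwint : ∀ C t, 0 ≤ C → |∫ u in s..t, K * w u * C| ≤ C / 2 * w t := by
    intro C t hC
    have hd : ∀ u ∈ Set.uIcc s t,
        HasDerivAt (fun u => Real.sinh (2 * K * (u - s)) / 2 * C) (K * w u * C) u := by
      intro u _
      have h1 : HasDerivAt (fun u => 2 * K * (u - s)) (2 * K) u := by
        simpa using ((hasDerivAt_id u).sub_const s).const_mul (2 * K)
      convert! (h1.sinh.div_const 2).mul_const C using 1
      simp only [hw]; ring
    rw [intervalIntegral.integral_eq_sub_of_hasDerivAt hd
      (Continuous.intervalIntegrable (by fun_prop) _ _)]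
    have h2 : |Real.sinh (2 * K * (t - s))| ≤ w t := by
      rw [abs_le]
      constructor
      · have := Real.cosh_add_sinh (2 * K * (t - s))
        have := Real.exp_pos (2 * K * (t - s))
        simp only [hw]; linarith
      · exact (Real.sinh_lt_cosh _).le
    simp only [sub_self, mul_zero, Real.sinh_zero, zero_div, zero_mul, sub_zero]
    rw [abs_mul, abs_div, abs_of_nonneg hC, abs_two]
    nlinarith
  have hint : ∀ y : ℝ → E, Continuous y → ∀ a b : ℝ,
      IntervalIntegrable (fun u => f u (y u)) volume a b := by
    intro y hy a b
    have hb : IntervalIntegrable (fun u => K * ‖y u‖) volume a b :=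
      Continuous.intervalIntegrable (by fun_prop) _ _
    refine hb.mono_fun (hm y hy).restrict (ae_restrict_of_ae ?_)
    filter_upwards [hlip] with u hu
    have := hu (y u) 0
    rw [hf0, sub_zero, sub_zero] at this
    exact this.trans (le_abs_self _)
  have hest : ∀ y z : ℝ → E, Continuous y → Continuous z → ∀ C, 0 ≤ C →
      (∀ u, ‖y u - z u‖ ≤ C) → ∀ t,
      ‖(w t)⁻¹ • ((∫ u in s..t, f u (w u • y u)) - ∫ u in s..t, f u (w u • z u))‖ ≤ C / 2 := by
    intro y z hy hz C hC hyz t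
    rw [← intervalIntegral.integral_sub (hint (fun u => w u • y u) (hwc.smul hy) _ _)
      (hint (fun u => w u • z u) (hwc.smul hz) _ _),
      norm_smul, norm_inv, Real.norm_of_nonneg (hw0 t).le]
    have h1 : ‖∫ u in s..t, (f u (w u • y u) - f u (w u • z u))‖ ≤ C / 2 * w t := by
      refine le_trans (intervalIntegral.norm_integral_le_abs_of_norm_le
        (g := fun u => K * w u * C) (ae_restrict_of_ae ?_)
        (Continuous.intervalIntegrable (by fun_prop) _ _)) (hwint C t hC)
      filter_upwards [hlip] with u hu
      refine (hu _ _).trans ?_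
      rw [← smul_sub, norm_smul, Real.norm_of_nonneg (hw0 u).le, mul_assoc]
      have := hw0 u
      gcongr
      exact hyz u
    rw [inv_mul_le_iff₀ (hw0 t)]
    linarith
  let T : BoundedContinuousFunction ℝ E → BoundedContinuousFunction ℝ E := fun y =>
    BoundedContinuousFunction.ofNormedAddCommGroup
      (fun t => (w t)⁻¹ • (v + ∫ u in s..t, f u (w u • y u)))
      ((hwc.inv₀ fun t => (hw0 t).ne').smul (continuous_const.add
        (intervalIntegral.continuous_primitive (hint _ (hwc.smul y.continuous)) s)))
      (‖v‖ + ‖y‖ / 2) (by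
        intro t
        rw [smul_add]
        refine (norm_add_le _ _).trans (add_le_add ?_ ?_)
        · rw [norm_smul, norm_inv, Real.norm_of_nonneg (hw0 t).le, inv_mul_le_iff₀ (hw0 t)]
          nlinarith [hw1 t, norm_nonneg v]
        · have := hest y 0 y.continuous continuous_zero ‖y‖ (norm_nonneg _)
            (fun u => by simpa using y.norm_coe_le_norm u) t
          simpa [hf0] using this)
  have hT : ContractingWith (1 / 2) T := by
    refine ⟨by norm_num, LipschitzWith.of_dist_le_mul fun y z => ?_⟩
    rw [BoundedContinuousFunction.dist_le (by positivity)]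
    intro t
    rw [dist_eq_norm]
    have := hest y z y.continuous z.continuous (dist y z) dist_nonneg
      (fun u => by rw [← dist_eq_norm]; exact BoundedContinuousFunction.dist_coe_le_dist u) t
    have h3 : (T y) t - (T z) t = (w t)⁻¹ • ((∫ u in s..t, f u (w u • y u)) -
        ∫ u in s..t, f u (w u • z u)) := by
      simp only [T, BoundedContinuousFunction.coe_ofNormedAddCommGroup]
      rw [← smul_sub, add_sub_add_left_eq_sub]
    rw [h3]
    refine this.trans (le_of_eq ?_)
    push_cast
    ring
  obtain ⟨y, hy⟩ : ∃ y, T y = y := ⟨_, hT.fixedPoint_isFixedPt⟩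
  refine ⟨fun t => w t • y t, hwc.smul y.continuous, fun t => ?_⟩
  have h : (w t)⁻¹ • (v + ∫ u in s..t, f u (w u • y u)) = y t :=
    congrArg (fun y : BoundedContinuousFunction ℝ E => y t) hy
  beta_reduce
  rw [← h, smul_inv_smul₀ (hw0 t).ne']

/-! ### Measurability, boundedness and integrability of the coefficients -/

/-- The bilinear form `⟨V(u)ᵀ y, V(u)ᵀ z⟩` on `ℝⁿ`; its matrix is `V(u) V(u)ᵀ`. -/
def obsForm {n r : ℕ} (V : ℝ → Matrix (Fin n) (Fin r) ℝ) (u : ℝ) (y z : Fin n → ℝ) : ℝ :=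
  ((V u)ᵀ *ᵥ y) ⬝ᵥ ((V u)ᵀ *ᵥ z)

/-- `x` solves `x' = -V Vᵀ x` on `[0,∞)`, in integrated form. -/
def IsSol {n r : ℕ} (V : ℝ → Matrix (Fin n) (Fin r) ℝ) (x : ℝ → Fin n → ℝ) : Prop :=
  ContinuousOn x (Set.Ici (0 : ℝ)) ∧
    ∀ t, (0 : ℝ) ≤ t → x t = x 0 + ∫ u in (0 : ℝ)..t, (-(V u * (V u)ᵀ)).mulVec (x u)

lemma obsForm_eq {n r : ℕ} (V : ℝ → Matrix (Fin n) (Fin r) ℝ) (u : ℝ) (y z : Fin n → ℝ) :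
    obsForm V u y z = ((V u * (V u)ᵀ) *ᵥ y) ⬝ᵥ z := by
  rw [obsForm, ← mulVec_mulVec, dotProduct_mulVec, vecMul_transpose]

lemma dotProduct_self_nonneg_real {n : ℕ} (y : Fin n → ℝ) : 0 ≤ y ⬝ᵥ y :=
  Finset.sum_nonneg fun _ _ => mul_self_nonneg _

lemma obsForm_self_nonneg {n r : ℕ} (V : ℝ → Matrix (Fin n) (Fin r) ℝ) (u : ℝ)
    (y : Fin n → ℝ) : 0 ≤ obsForm V u y y :=
  dotProduct_self_nonneg_real _

lemma PiecewiseContinuous.aestronglyMeasurable {f : ℝ → ℝ} (hf : PiecewiseContinuous f) :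
    AEStronglyMeasurable f (volume.restrict (Set.Ici (0 : ℝ))) := by
  have hU : Set.Ici (0 : ℝ) = ⋃ k : ℕ, Set.Icc (0 : ℝ) k := by
    ext t
    simp only [Set.mem_Ici, Set.mem_iUnion, Set.mem_Icc]
    exact ⟨fun h => (exists_nat_ge t).imp fun k hk => ⟨h, hk⟩, fun ⟨k, h, _⟩ => h⟩
  rw [hU, aestronglyMeasurable_iUnion_iff]
  intro k
  obtain ⟨S, hS⟩ := hf k
  have h1 := hS.aestronglyMeasurable (μ := volume)
    (measurableSet_Icc.diff S.finite_toSet.measurableSet)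
  have h2 : (Set.Icc (0 : ℝ) k \ (S : Set ℝ) : Set ℝ) =ᵐ[volume] Set.Icc (0 : ℝ) k :=
    sdiff_null_ae_eq_self (S.finite_toSet.measure_zero volume)
  rwa [Measure.restrict_congr_set h2] at h1

section System

variable {n r : ℕ} {V : ℝ → Matrix (Fin n) (Fin r) ℝ} {A : ℝ}

lemma aestronglyMeasurable_entry (hpc : ∀ i j, PiecewiseContinuous fun t => V t i j)
    (i k : Fin n) :
    AEStronglyMeasurable (fun t => (V t * (V t)ᵀ) i k) (volume.restrict (Set.Ici (0 : ℝ))) := by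
  simp only [mul_apply, transpose_apply]
  exact Finset.aestronglyMeasurable_fun_sum _ fun j _ =>
    (hpc i j).aestronglyMeasurable.mul (hpc k j).aestronglyMeasurable

lemma entry_bound (hbd : ∀ i j, ∀ᵐ t ∂(volume : Measure ℝ), |V t i j| ≤ A) :
    ∀ᵐ t ∂(volume : Measure ℝ), ∀ i k, |(V t * (V t)ᵀ) i k| ≤ r * A ^ 2 := by
  have h : ∀ᵐ t ∂(volume : Measure ℝ), ∀ i j, |V t i j| ≤ A := by
    simpa only [ae_all_iff] using hbd
  filter_upwards [h] with t ht i k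
  simp only [mul_apply, transpose_apply]
  refine (Finset.abs_sum_le_sum_abs _ _).trans ?_
  refine (Finset.sum_le_card_nsmul _ _ (A ^ 2) fun j _ => ?_).trans (by simp)
  rw [abs_mul, sq]
  exact mul_le_mul (ht i j) (ht k j) (abs_nonneg _) ((abs_nonneg _).trans (ht i j))

lemma intervalIntegrable_entry (hpc : ∀ i j, PiecewiseContinuous fun t => V t i j)
    (hbd : ∀ i j, ∀ᵐ t ∂(volume : Measure ℝ), |V t i j| ≤ A) {a b : ℝ} (ha : 0 ≤ a) (hb : 0 ≤ b)
    (i k : Fin n) : IntervalIntegrable (fun t => (V t * (V t)ᵀ) i k) volume a b := by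
  refine (intervalIntegrable_const (c := (r * A ^ 2 : ℝ))).mono_fun
    ((aestronglyMeasurable_entry hpc i k).mono_measure (Measure.restrict_mono ?_ le_rfl))
    (ae_restrict_of_ae ?_)
  · exact fun u hu => (le_min ha hb).trans hu.1.le
  · filter_upwards [entry_bound hbd] with t ht
    exact (ht i k).trans (le_abs_self _)

lemma intervalIntegrable_obsForm (hpc : ∀ i j, PiecewiseContinuous fun t => V t i j)
    (hbd : ∀ i j, ∀ᵐ t ∂(volume : Measure ℝ), |V t i j| ≤ A) {a b : ℝ} (ha : 0 ≤ a) (hb : 0 ≤ b)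
    {y z : ℝ → Fin n → ℝ} (hy : ContinuousOn y (Set.Ici 0)) (hz : ContinuousOn z (Set.Ici 0)) :
    IntervalIntegrable (fun u => obsForm V u (y u) (z u)) volume a b := by
  have hsub : Set.uIcc a b ⊆ Set.Ici 0 := fun u hu => (le_min ha hb).trans hu.1
  simp only [obsForm_eq, dotProduct, mulVec, Finset.sum_mul]
  have hsum : ∀ F : Fin n → ℝ → ℝ, (∀ i, IntervalIntegrable (F i) volume a b) →
      IntervalIntegrable (fun u => ∑ i, F i u) volume a b := fun F hF => by
    simpa only [Finset.sum_fn] using IntervalIntegrable.sum Finset.univ fun i _ => hF i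
  refine hsum _ fun i => hsum _ fun k => ?_
  exact ((intervalIntegrable_entry hpc hbd ha hb i k).mul_continuousOn
    ((continuousOn_pi.1 hy k).mono hsub)).mul_continuousOn ((continuousOn_pi.1 hz i).mono hsub)

lemma intervalIntegrable_rhs (hpc : ∀ i j, PiecewiseContinuous fun t => V t i j)
    (hbd : ∀ i j, ∀ᵐ t ∂(volume : Measure ℝ), |V t i j| ≤ A) {a b : ℝ} (ha : 0 ≤ a) (hb : 0 ≤ b)
    {y : ℝ → Fin n → ℝ} (hy : ContinuousOn y (Set.Ici 0)) :
    IntervalIntegrable (fun u => (-(V u * (V u)ᵀ)) *ᵥ y u) volume a b := by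
  have h : ∀ i, IntervalIntegrable (fun u => ((-(V u * (V u)ᵀ)) *ᵥ y u) i) volume a b := by
    intro i
    convert! (intervalIntegrable_obsForm hpc hbd ha hb hy
      (continuousOn_const (c := (Pi.single i 1 : Fin n → ℝ)))).neg using 2 with u
    simp [obsForm_eq, neg_mulVec]
  exact ⟨Integrable.of_eval fun i => (h i).1, Integrable.of_eval fun i => (h i).2⟩

/-- Pointwise bound of the quadratic form, by Cauchy–Schwarz in each of the `r` columns. -/
lemma obsForm_self_le (hbd : ∀ i j, ∀ᵐ t ∂(volume : Measure ℝ), |V t i j| ≤ A) :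
    ∀ᵐ u ∂(volume : Measure ℝ), ∀ y, obsForm V u y y ≤ (n * r * A ^ 2 + 1) * (y ⬝ᵥ y) := by
  have h : ∀ᵐ t ∂(volume : Measure ℝ), ∀ i j, |V t i j| ≤ A := by
    simpa only [ae_all_iff] using hbd
  filter_upwards [h] with u hu y
  have hy := dotProduct_self_nonneg_real y
  have hcol : ∀ j, ((V u)ᵀ *ᵥ y) j * ((V u)ᵀ *ᵥ y) j ≤ n * A ^ 2 * (y ⬝ᵥ y) := by
    intro j
    have h1 := Finset.sum_mul_sq_le_sq_mul_sq Finset.univ (fun i => V u i j) y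
    have h2 : ∑ i, V u i j ^ 2 ≤ n * A ^ 2 := by
      refine (Finset.sum_le_card_nsmul _ _ (A ^ 2) fun i _ => ?_).trans (by simp)
      exact sq_le_sq' (abs_le.1 (hu i j)).1 (abs_le.1 (hu i j)).2
    have h3 : ∑ i, y i ^ 2 = y ⬝ᵥ y := by simp [dotProduct, sq]
    rw [h3] at h1
    have h4 : ((V u)ᵀ *ᵥ y) j = ∑ i, V u i j * y i := rfl
    rw [h4, ← sq]
    exact h1.trans (mul_le_mul_of_nonneg_right h2 hy)
  calc obsForm V u y y ≤ ∑ _j : Fin r, n * A ^ 2 * (y ⬝ᵥ y) :=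
        by rw [obsForm, dotProduct]; exact Finset.sum_le_sum fun j _ => hcol j
    _ = n * r * A ^ 2 * (y ⬝ᵥ y) := by simp; ring
    _ ≤ _ := by linarith

lemma exists_isSol (hpc : ∀ i j, PiecewiseContinuous fun t => V t i j)
    (hbd : ∀ i j, ∀ᵐ t ∂(volume : Measure ℝ), |V t i j| ≤ A) {s : ℝ} (hs : 0 ≤ s)
    (v : Fin n → ℝ) : ∃ x, IsSol V x ∧ x s = v := by
  -- The equation is extended by zero to negative times, where nothing is known about `V`.
  let f : ℝ → (Fin n → ℝ) → (Fin n → ℝ) := fun u y =>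
    (Set.Ici (0 : ℝ)).indicator (fun u => (-(V u * (V u)ᵀ)) *ᵥ y) u
  obtain ⟨x, hxc, hx⟩ := exists_global_solution f (n * (r * A ^ 2) + 1) (by positivity)
    (fun u => by simp [f]) (by
      filter_upwards [entry_bound hbd] with u hu y z
      by_cases h0 : u ∈ Set.Ici (0 : ℝ)
      · simp only [f, Set.indicator_of_mem h0]
        rw [← mulVec_sub, neg_mulVec, norm_neg, pi_norm_le_iff_of_nonneg (by positivity)]
        intro i
        rw [Real.norm_eq_abs, mulVec, dotProduct]
        refine (Finset.abs_sum_le_sum_abs _ _).trans ?_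
        refine (Finset.sum_le_card_nsmul _ _ (r * A ^ 2 * ‖y - z‖) fun k _ => ?_).trans ?_
        · rw [abs_mul]
          exact mul_le_mul (hu i k) (norm_le_pi_norm (y - z) k) (abs_nonneg _) (by positivity)
        · simp only [card_univ, Fintype.card_fin, nsmul_eq_mul]
          nlinarith [norm_nonneg (y - z)]
      · simp only [f, Set.indicator_of_notMem h0, sub_self, norm_zero]
        positivity)
    (by
      intro y hy
      have : (fun u => f u (y u)) =
          (Set.Ici (0 : ℝ)).indicator (fun u => (-(V u * (V u)ᵀ)) *ᵥ y u) := rfl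
      rw [this, aestronglyMeasurable_indicator_iff measurableSet_Ici]
      refine (aemeasurable_pi_iff.2 fun i => AEStronglyMeasurable.aemeasurable ?_).aestronglyMeasurable
      simp only [mulVec, dotProduct, Matrix.neg_apply]
      exact Finset.aestronglyMeasurable_fun_sum _ fun k _ =>
        (aestronglyMeasurable_entry hpc i k).neg.mul
          ((continuous_apply k).comp hy).aestronglyMeasurable) s v
  have hcongr : ∀ a b : ℝ, 0 ≤ a → 0 ≤ b →
      ∫ u in a..b, f u (x u) = ∫ u in a..b, (-(V u * (V u)ᵀ)) *ᵥ x u := by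
    intro a b ha hb
    refine intervalIntegral.integral_congr fun u hu => ?_
    exact Set.indicator_of_mem (s := Set.Ici (0 : ℝ)) ((le_min ha hb).trans hu.1) _
  refine ⟨x, ⟨hxc.continuousOn, fun t ht => ?_⟩, by simpa using hx s⟩
  have hi := fun {a b : ℝ} (ha : 0 ≤ a) (hb : 0 ≤ b) =>
    intervalIntegrable_rhs hpc hbd ha hb hxc.continuousOn
  rw [hx t, hx 0, hcongr s t hs ht, hcongr s 0 hs le_rfl, add_assoc,
    intervalIntegral.integral_add_adjacent_intervals (hi hs le_rfl) (hi le_rfl ht)]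

/-! ### Identities and estimates along solutions -/

lemma isSol_sub (hpc : ∀ i j, PiecewiseContinuous fun t => V t i j)
    (hbd : ∀ i j, ∀ᵐ t ∂(volume : Measure ℝ), |V t i j| ≤ A) {x : ℝ → Fin n → ℝ}
    (hx : IsSol V x) {s t : ℝ} (hs : 0 ≤ s) (ht : 0 ≤ t) (v : Fin n → ℝ) :
    (x t - x s) ⬝ᵥ v = -∫ u in s..t, obsForm V u (x u) v := by
  have hi := fun {a b : ℝ} (ha : 0 ≤ a) (hb : 0 ≤ b) =>
    intervalIntegrable_rhs hpc hbd ha hb hx.1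
  let L : (Fin n → ℝ) →L[ℝ] ℝ := LinearMap.toContinuousLinearMap
    { toFun := fun y => y ⬝ᵥ v
      map_add' := fun y z => add_dotProduct y z v
      map_smul' := fun c y => smul_dotProduct c y v }
  have h1 : x t - x s = ∫ u in s..t, (-(V u * (V u)ᵀ)) *ᵥ x u := by
    rw [hx.2 t ht, hx.2 s hs, add_sub_add_left_eq_sub,
      intervalIntegral.integral_interval_sub_left (hi le_rfl ht) (hi le_rfl hs)]
  have h2 := L.intervalIntegral_comp_comm (hi hs ht)
  rw [← h1] at h2
  change (∫ u in s..t, ((-(V u * (V u)ᵀ)) *ᵥ x u) ⬝ᵥ v) = (x t - x s) ⬝ᵥ v at h2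
  rw [← h2, ← intervalIntegral.integral_neg]
  simp only [obsForm_eq, neg_mulVec, neg_dotProduct]

/-- Away from finitely many times in `(0,b)`, a solution satisfies the differential equation in
the classical sense. -/
lemma isSol_hasDerivAt (hpc : ∀ i j, PiecewiseContinuous fun t => V t i j)
    (hbd : ∀ i j, ∀ᵐ t ∂(volume : Measure ℝ), |V t i j| ≤ A) {x : ℝ → Fin n → ℝ}
    (hx : IsSol V x) (b : ℝ) :
    ∃ S : Set ℝ, S.Finite ∧ ∀ t ∈ Set.Ioo 0 b \ S,
      HasDerivAt x ((-(V t * (V t)ᵀ)) *ᵥ x t) t := by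
  choose S hS using fun i j => hpc i j b
  have hfin : (⋃ i, ⋃ j, (S i j : Set ℝ)).Finite :=
    Set.finite_iUnion fun i => Set.finite_iUnion fun j => (S i j).finite_toSet
  refine ⟨_, hfin, fun t ht => ?_⟩
  set O : Set ℝ := Set.Ioo 0 b \ ⋃ i, ⋃ j, (S i j : Set ℝ) with hO
  have hOo : IsOpen O := isOpen_Ioo.sdiff hfin.isClosed
  have hV : ∀ i j, ContinuousOn (fun t => V t i j) O := fun i j =>
    (hS i j).mono fun u hu => ⟨⟨hu.1.1.le, hu.1.2.le⟩, fun h =>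
      hu.2 (Set.mem_iUnion.2 ⟨i, Set.mem_iUnion.2 ⟨j, h⟩⟩)⟩
  have hxO : ContinuousOn x O := hx.1.mono fun u hu => hu.1.1.le
  have hc : ContinuousOn (fun u => (-(V u * (V u)ᵀ)) *ᵥ x u) O := by
    refine continuousOn_pi.2 fun i => ?_
    simp only [mulVec, dotProduct, Matrix.neg_apply, mul_apply, transpose_apply]
    exact continuousOn_finsetSum _ fun k _ => (continuousOn_finsetSum _ fun j _ =>
      (hV i j).mul (hV k j)).neg.mul (continuousOn_pi.1 hxO k)
  have hd := intervalIntegral.integral_hasDerivAt_right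
    (intervalIntegrable_rhs hpc hbd le_rfl ht.1.1.le hx.1)
    (hc.stronglyMeasurableAtFilter hOo t ht) (hc.continuousAt (hOo.mem_nhds ht))
  refine (hd.const_add (x 0)).congr_of_eventuallyEq ?_
  filter_upwards [hOo.mem_nhds ht] with u hu
  exact hx.2 u hu.1.1.le

/-- Energy identity: `‖x(t)‖² - ‖x(s)‖² = -2 ∫ₛᵗ ‖V(u)ᵀ x(u)‖² du`. -/
lemma isSol_energy (hpc : ∀ i j, PiecewiseContinuous fun t => V t i j)
    (hbd : ∀ i j, ∀ᵐ t ∂(volume : Measure ℝ), |V t i j| ≤ A) {x : ℝ → Fin n → ℝ}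
    (hx : IsSol V x) {s t : ℝ} (hs : 0 ≤ s) (hst : s ≤ t) :
    x t ⬝ᵥ x t - x s ⬝ᵥ x s = -2 * ∫ u in s..t, obsForm V u (x u) (x u) := by
  obtain ⟨S, hSf, hS⟩ := isSol_hasDerivAt hpc hbd hx t
  have hxc : ContinuousOn x (Set.Icc s t) := hx.1.mono fun u hu => hs.trans hu.1
  rw [← intervalIntegral.integral_const_mul]
  symm
  refine integral_eq_of_hasDerivAt_off_countable_of_le (fun u => x u ⬝ᵥ x u) _ hst
    hSf.countable ?_ (fun u hu => ?_)
    ((intervalIntegrable_obsForm hpc hbd hs (hs.trans hst) hx.1 hx.1).const_mul _)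
  · exact continuousOn_finsetSum _ fun i _ =>
      (continuousOn_pi.1 hxc i).mul (continuousOn_pi.1 hxc i)
  · have hd := hasDerivAt_pi.1 (hS u ⟨⟨hs.trans_lt hu.1.1, hu.1.2⟩, hu.2⟩)
    have h2 := HasDerivAt.fun_sum (u := Finset.univ) fun i _ => (hd i).mul (hd i)
    convert! h2 using 1
    rw [obsForm_eq, dotProduct, Finset.mul_sum]
    refine Finset.sum_congr rfl fun i _ => ?_
    simp only [neg_mulVec, Pi.neg_apply]
    ring

lemma integral_obsForm_nonneg {s t : ℝ} (hst : s ≤ t) (y : ℝ → Fin n → ℝ) :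
    0 ≤ ∫ u in s..t, obsForm V u (y u) (y u) :=
  intervalIntegral.integral_nonneg hst fun u _ => obsForm_self_nonneg V u _

/-- For a fixed vector `v`, Cauchy–Schwarz bounds `⟨x(t) - x(s), v⟩²` by the energy dissipated
along the solution times the energy of `v`. -/
lemma isSol_cauchySchwarz (hpc : ∀ i j, PiecewiseContinuous fun t => V t i j)
    (hbd : ∀ i j, ∀ᵐ t ∂(volume : Measure ℝ), |V t i j| ≤ A) {x : ℝ → Fin n → ℝ}
    (hx : IsSol V x) {s t : ℝ} (hs : 0 ≤ s) (hst : s ≤ t) (v : Fin n → ℝ) :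
    ((x t - x s) ⬝ᵥ v) ^ 2 ≤
      (∫ u in s..t, obsForm V u (x u) (x u)) * ∫ u in s..t, obsForm V u v v := by
  have ht := hs.trans hst
  have hv : ContinuousOn (fun _ : ℝ => v) (Set.Ici 0) := continuousOn_const
  have i1 := intervalIntegrable_obsForm hpc hbd hs ht hx.1 hx.1
  have i2 := intervalIntegrable_obsForm hpc hbd hs ht hx.1 hv
  have i3 := intervalIntegrable_obsForm hpc hbd hs ht hv hv
  rw [isSol_sub hpc hbd hx hs ht v]
  have key : ∀ c : ℝ, 0 ≤ (∫ u in s..t, obsForm V u (x u) (x u)) * (c * c) +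
      2 * (∫ u in s..t, obsForm V u (x u) v) * c + ∫ u in s..t, obsForm V u v v := by
    intro c
    have h := integral_obsForm_nonneg (V := V) hst fun u => c • x u + v
    have he : ∀ u, obsForm V u (c • x u + v) (c • x u + v) = c * c * obsForm V u (x u) (x u) +
        2 * c * obsForm V u (x u) v + obsForm V u v v := by
      intro u
      simp only [obsForm, mulVec_add, mulVec_smul, add_dotProduct, dotProduct_add,
        smul_dotProduct, dotProduct_smul, smul_eq_mul]
      rw [dotProduct_comm ((V u)ᵀ *ᵥ v) ((V u)ᵀ *ᵥ x u)]
      ring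
    simp only [he] at h
    rw [intervalIntegral.integral_add ((i1.const_mul _).add (i2.const_mul _)) i3,
      intervalIntegral.integral_add (i1.const_mul _) (i2.const_mul _),
      intervalIntegral.integral_const_mul, intervalIntegral.integral_const_mul] at h
    linarith
  have := discrim_le_zero key
  rw [discrim] at this
  nlinarith

lemma integral_obsForm_le (hpc : ∀ i j, PiecewiseContinuous fun t => V t i j)
    (hbd : ∀ i j, ∀ᵐ t ∂(volume : Measure ℝ), |V t i j| ≤ A) {s t : ℝ} (hs : 0 ≤ s) (hst : s ≤ t)
    (v : Fin n → ℝ) :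
    ∫ u in s..t, obsForm V u v v ≤ (n * r * A ^ 2 + 1) * (t - s) * (v ⬝ᵥ v) := by
  have h := intervalIntegral.integral_mono_ae hst
    (intervalIntegrable_obsForm hpc hbd hs (hs.trans hst)
      (continuousOn_const (c := v)) (continuousOn_const (c := v)))
    (intervalIntegrable_const (c := (n * r * A ^ 2 + 1) * (v ⬝ᵥ v)))
    ((obsForm_self_le hbd).mono fun u hu => hu v)
  rw [intervalIntegral.integral_const, smul_eq_mul] at h
  linarith

/-- The observability Gramian as a quadratic form. -/
lemma gramian_form (hpc : ∀ i j, PiecewiseContinuous fun t => V t i j)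
    (hbd : ∀ i j, ∀ᵐ t ∂(volume : Measure ℝ), |V t i j| ≤ A) {s t : ℝ} (hs : 0 ≤ s) (ht : 0 ≤ t)
    (v : Fin n → ℝ) :
    v ⬝ᵥ ((Matrix.of fun i j => ∫ u in s..t, (V u * (V u)ᵀ) i j) *ᵥ v) =
      ∫ u in s..t, obsForm V u v v := by
  have hi := fun i k => (intervalIntegrable_entry hpc hbd hs ht i k).mul_const (v k)
  have hi' : ∀ i, IntervalIntegrable (fun u => ∑ k, (V u * (V u)ᵀ) i k * v k) volume s t :=
    fun i => by simpa only [Finset.sum_fn] using IntervalIntegrable.sum Finset.univ fun k _ => hi i k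
  simp only [obsForm_eq, dotProduct, mulVec, of_apply]
  rw [intervalIntegral.integral_finsetSum fun i _ => (hi' i).mul_const _]
  refine Finset.sum_congr rfl fun i _ => ?_
  rw [intervalIntegral.integral_mul_const, intervalIntegral.integral_finsetSum fun k _ => hi i k,
    mul_comm]
  simp only [intervalIntegral.integral_mul_const]

lemma gramian_isHermitian (V : ℝ → Matrix (Fin n) (Fin r) ℝ) (s t : ℝ) :
    (Matrix.of fun i j => ∫ u in s..t, (V u * (V u)ᵀ) i j).IsHermitian := by
  ext i j
  simp only [conjTranspose_apply, of_apply, star_trivial, mul_apply, transpose_apply]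
  simp only [mul_comm]

lemma gramian_bounds_iff (hpc : ∀ i j, PiecewiseContinuous fun t => V t i j)
    (hbd : ∀ i j, ∀ᵐ t ∂(volume : Measure ℝ), |V t i j| ≤ A) {s t : ℝ} (hs : 0 ≤ s) (ht : 0 ≤ t)
    (α₁ α₂ : ℝ) :
    (((Matrix.of fun i j => ∫ u in s..t, (V u * (V u)ᵀ) i j) -
        α₁ • (1 : Matrix (Fin n) (Fin n) ℝ)).PosSemidef ∧
      (α₂ • (1 : Matrix (Fin n) (Fin n) ℝ) -
        Matrix.of fun i j => ∫ u in s..t, (V u * (V u)ᵀ) i j).PosSemidef) ↔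
    ∀ v : Fin n → ℝ, α₁ * (v ⬝ᵥ v) ≤ (∫ u in s..t, obsForm V u v v) ∧
      (∫ u in s..t, obsForm V u v v) ≤ α₂ * (v ⬝ᵥ v) := by
  have hone : ∀ a : ℝ, (a • (1 : Matrix (Fin n) (Fin n) ℝ)).IsHermitian := fun a => by
    ext i j
    simp [one_apply, eq_comm]
  rw [posSemidef_iff_dotProduct_mulVec, posSemidef_iff_dotProduct_mulVec,
    and_iff_right ((gramian_isHermitian V s t).sub (hone α₁)),
    and_iff_right ((hone α₂).sub (gramian_isHermitian V s t)), forall_and]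
  simp only [star_trivial, sub_mulVec, smul_mulVec, one_mulVec, dotProduct_sub, dotProduct_smul,
    smul_eq_mul, gramian_form hpc hbd hs ht, sub_nonneg]

/-! ### The two implications -/

/-- Over one observability window the squared norm contracts. With `K = n r A² + 1` and `D` the
energy dissipated on `[s, s+δ]`, one has `‖x(u) - x(s)‖² ≤ K δ D` there, so that
`‖V(u)ᵀ x(s)‖² ≤ 2 ‖V(u)ᵀ x(u)‖² + 2 K² δ D`; integrating,
`α ‖x(s)‖² ≤ (1 + K² δ²) · 2 D`, and `2 D` is the loss of squared norm. -/
lemma isSol_window (hpc : ∀ i j, PiecewiseContinuous fun t => V t i j)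
    (hbd : ∀ i j, ∀ᵐ t ∂(volume : Measure ℝ), |V t i j| ≤ A) {x : ℝ → Fin n → ℝ}
    (hx : IsSol V x) {s δ α : ℝ} (hs : 0 ≤ s) (hδ : 0 < δ)
    (hobs : α * (x s ⬝ᵥ x s) ≤ ∫ u in s..s + δ, obsForm V u (x s) (x s)) :
    x (s + δ) ⬝ᵥ x (s + δ) ≤
      (1 - α / (1 + (n * r * A ^ 2 + 1) ^ 2 * δ ^ 2)) * (x s ⬝ᵥ x s) := by
  set K : ℝ := n * r * A ^ 2 + 1 with hKdef
  have hK : 0 < K := by positivity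
  have hsδ : s ≤ s + δ := by linarith
  have ht : 0 ≤ s + δ := by linarith
  have i1 := intervalIntegrable_obsForm hpc hbd hs ht hx.1 hx.1
  set D := ∫ u in s..s + δ, obsForm V u (x u) (x u) with hD
  have hD0 : 0 ≤ D := integral_obsForm_nonneg hsδ x
  have hdiff : ∀ u ∈ Set.Icc s (s + δ), (x u - x s) ⬝ᵥ (x u - x s) ≤ K * δ * D := by
    intro u hu
    have h1 := isSol_cauchySchwarz hpc hbd hx hs hu.1 (x u - x s)
    have h2 := integral_obsForm_le hpc hbd hs hu.1 (x u - x s)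
    have h3 : ∫ τ in s..u, obsForm V τ (x τ) (x τ) ≤ D :=
      intervalIntegral.integral_mono_interval le_rfl hu.1 hu.2
        (ae_of_all _ fun τ => obsForm_self_nonneg V τ _) i1
    set d := (x u - x s) ⬝ᵥ (x u - x s)
    have hd : 0 ≤ d := dotProduct_self_nonneg_real _
    have h4 : d ^ 2 ≤ D * (K * δ * d) := by
      refine h1.trans (mul_le_mul h3 (h2.trans ?_)
        (integral_obsForm_nonneg hu.1 fun _ => x u - x s) hD0)
      have : u - s ≤ δ := by linarith [hu.2]
      gcongr
    rcases hd.eq_or_lt with h0 | h0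
    · rw [← h0]; positivity
    · nlinarith
  have hmono : ∫ u in s..s + δ, obsForm V u (x s) (x s) ≤
      ∫ u in s..s + δ, (2 * obsForm V u (x u) (x u) + 2 * (K * (K * δ * D))) := by
    refine intervalIntegral.integral_mono_ae_restrict hsδ
      (intervalIntegrable_obsForm hpc hbd hs ht continuousOn_const continuousOn_const)
      ((i1.const_mul 2).add intervalIntegrable_const) ?_
    filter_upwards [ae_restrict_of_ae (obsForm_self_le hbd), ae_restrict_mem measurableSet_Icc]
      with u hu hmem
    have h1 := (hu (x u - x s)).trans (mul_le_mul_of_nonneg_left (hdiff u hmem) hK.le)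
    -- `‖a‖² ≤ 2‖b‖² + 2‖b - a‖²`, from `0 ≤ ‖a - 2b‖²`.
    have h2 : obsForm V u (x s) (x s) + obsForm V u (x s - (2 : ℝ) • x u) (x s - (2 : ℝ) • x u) =
        2 * obsForm V u (x u) (x u) + 2 * obsForm V u (x u - x s) (x u - x s) := by
      simp only [obsForm, mulVec_sub, mulVec_smul, sub_dotProduct, dotProduct_sub,
        smul_dotProduct, dotProduct_smul, smul_eq_mul]
      rw [dotProduct_comm ((V u)ᵀ *ᵥ x s) ((V u)ᵀ *ᵥ x u)]
      ring
    have h3 := obsForm_self_nonneg V u (x s - (2 : ℝ) • x u)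
    linarith
  rw [intervalIntegral.integral_add (i1.const_mul 2) intervalIntegrable_const,
    intervalIntegral.integral_const_mul, intervalIntegral.integral_const, smul_eq_mul, ← hD]
    at hmono
  have hen := isSol_energy hpc hbd hx hs hsδ
  rw [← hD] at hen
  have h5 : α / (1 + K ^ 2 * δ ^ 2) * (x s ⬝ᵥ x s) ≤ 2 * D := by
    rw [div_mul_eq_mul_div, div_le_iff₀ (by positivity)]
    nlinarith
  linarith

lemma enorm'_eq (v : Fin n → ℝ) : enorm' v = Real.sqrt (v ⬝ᵥ v) := by
  simp [enorm', dotProduct, sq]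

lemma expStable_of_observable (hpc : ∀ i j, PiecewiseContinuous fun t => V t i j)
    (hbd : ∀ i j, ∀ᵐ t ∂(volume : Measure ℝ), |V t i j| ≤ A) {α δ : ℝ} (hα : 0 < α) (hδ : 0 < δ)
    (hobs : ∀ s, 0 ≤ s → ∀ v : Fin n → ℝ,
      α * (v ⬝ᵥ v) ≤ ∫ u in s..s + δ, obsForm V u v v) :
    ∃ γ₁ > (0 : ℝ), ∃ γ₂ > (0 : ℝ), ∀ x, IsSol V x → ∀ s t : ℝ, 0 ≤ s → s ≤ t →
      enorm' (x t) ≤ γ₁ * Real.exp (-γ₂ * (t - s)) * enorm' (x s) := by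
  set c : ℝ := α / (1 + (n * r * A ^ 2 + 1) ^ 2 * δ ^ 2) with hc
  have hc0 : 0 < c := by positivity
  refine ⟨Real.exp (c / 2), Real.exp_pos _, c / (2 * δ), by positivity, fun x hx s t hs hst => ?_⟩
  have hstep : ∀ k : ℕ, x (s + k * δ) ⬝ᵥ x (s + k * δ) ≤ Real.exp (-c * k) * (x s ⬝ᵥ x s) := by
    intro k
    induction k with
    | zero => simp
    | succ k ih =>
      have hk : 0 ≤ s + k * δ := by positivity
      have h1 := isSol_window hpc hbd hx hk hδ (hobs _ hk _)
      rw [← hc] at h1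
      have h2 : 1 - c ≤ Real.exp (-c) := Real.one_sub_le_exp_neg c
      have h3 : s + ((k + 1 : ℕ) : ℝ) * δ = s + k * δ + δ := by push_cast; ring
      rw [h3]
      calc _ ≤ (1 - c) * (x (s + k * δ) ⬝ᵥ x (s + k * δ)) := h1
        _ ≤ Real.exp (-c) * (x (s + k * δ) ⬝ᵥ x (s + k * δ)) :=
          mul_le_mul_of_nonneg_right h2 (dotProduct_self_nonneg_real _)
        _ ≤ Real.exp (-c) * (Real.exp (-c * k) * (x s ⬝ᵥ x s)) := by gcongr
        _ = _ := by
          rw [← mul_assoc, ← Real.exp_add]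
          congr 2
          push_cast
          ring
  set k := ⌊(t - s) / δ⌋₊ with hk
  have hk1 : (k : ℝ) * δ ≤ t - s := by
    rw [← le_div_iff₀ hδ]
    exact Nat.floor_le (div_nonneg (by linarith) hδ.le)
  have hk2 : (t - s) / δ < k + 1 := Nat.lt_floor_add_one _
  have hen := isSol_energy hpc hbd hx (s := s + k * δ) (t := t) (by positivity) (by linarith)
  have hnn := integral_obsForm_nonneg (V := V) (s := s + k * δ) (t := t) (by linarith) x
  have hfin : x t ⬝ᵥ x t ≤
      (Real.exp (c / 2) * Real.exp (-(c / (2 * δ)) * (t - s))) ^ 2 * (x s ⬝ᵥ x s) := by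
    refine (show _ ≤ x (s + k * δ) ⬝ᵥ x (s + k * δ) by linarith).trans ((hstep k).trans ?_)
    refine mul_le_mul_of_nonneg_right ?_ (dotProduct_self_nonneg_real _)
    rw [← Real.exp_add, ← Real.exp_nat_mul, Real.exp_le_exp]
    have : ((2 : ℕ) : ℝ) * (c / 2 + -(c / (2 * δ)) * (t - s)) = c - c * ((t - s) / δ) := by
      push_cast
      field_simp
      ring
    rw [this]
    nlinarith
  rw [enorm'_eq, enorm'_eq]
  refine (Real.sqrt_le_sqrt hfin).trans (le_of_eq ?_)
  rw [Real.sqrt_mul (by positivity), Real.sqrt_sq (by positivity)]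

/-- If every solution loses half its norm over a time `δ`, then a solution started at `v` satisfies
`⟨v - x(s+δ), v⟩ ≥ ‖v‖² / 2`, while it dissipates at most `‖v‖² / 2`; the Cauchy–Schwarz estimate
then bounds the Gramian from below by `1/2`. -/
lemma observable_of_halving (hpc : ∀ i j, PiecewiseContinuous fun t => V t i j)
    (hbd : ∀ i j, ∀ᵐ t ∂(volume : Measure ℝ), |V t i j| ≤ A) {s δ : ℝ} (hs : 0 ≤ s) (hδ : 0 < δ)
    (hhalf : ∀ x, IsSol V x → enorm' (x (s + δ)) ≤ 1 / 2 * enorm' (x s)) (v : Fin n → ℝ) :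
    1 / 2 * (v ⬝ᵥ v) ≤ ∫ u in s..s + δ, obsForm V u v v := by
  have hsδ : s ≤ s + δ := by linarith
  obtain ⟨x, hx, rfl⟩ := exists_isSol hpc hbd hs v
  have hcs := isSol_cauchySchwarz hpc hbd hx hs hsδ (x s)
  have hen := isSol_energy hpc hbd hx hs hsδ
  have hF := integral_obsForm_nonneg (V := V) hsδ fun _ => x s
  have hh := hhalf x hx
  rw [enorm'_eq, enorm'_eq] at hh
  have hp := dotProduct_self_nonneg_real (x (s + δ))
  have hv := dotProduct_self_nonneg_real (x s)
  have hq : x (s + δ) ⬝ᵥ x (s + δ) ≤ 1 / 4 * (x s ⬝ᵥ x s) := by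
    have := mul_self_le_mul_self (Real.sqrt_nonneg _) hh
    rw [Real.mul_self_sqrt hp] at this
    nlinarith [Real.mul_self_sqrt hv]
  -- `0 ≤ ‖x(s+δ) - x(s)/2‖²` bounds the cross term.
  have hy := dotProduct_self_nonneg_real (x (s + δ) - (1 / 2 : ℝ) • x s)
  simp only [sub_dotProduct, dotProduct_sub, smul_dotProduct, dotProduct_smul, smul_eq_mul] at hy
  rw [dotProduct_comm (x s) (x (s + δ))] at hy
  rw [sub_dotProduct] at hcs
  set F := ∫ u in s..s + δ, obsForm V u (x s) (x s)
  set D := ∫ u in s..s + δ, obsForm V u (x u) (x u)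
  set a := x s ⬝ᵥ x s
  set m := x (s + δ) ⬝ᵥ x s
  have hm : m ≤ a / 2 := by linarith
  have h1 : (a / 2) ^ 2 ≤ a / 2 * F := by
    have h2 : D * F ≤ a / 2 * F := mul_le_mul_of_nonneg_right (by linarith) hF
    nlinarith
  rcases hv.eq_or_lt with h0 | h0
  · rw [← h0]; simpa using hF
  · nlinarith

end System

/-- **Lemma 1.** Let `V : [0,∞) → ℝ^{n×r}` be piecewise continuous and almost
everywhere bounded.  The linear time-varying system `x'(t) = -V(t)V(t)ᵀ x(t)` is
exponentially asymptotically stable if and only if there exist `α₁, α₂, δ > 0` with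
`α₁ I ≤ ∫_s^{s+δ} V(t)V(t)ᵀ dt ≤ α₂ I` (Loewner order) for all `s ≥ 0`. -/
theorem exp_stable_iff_uniform_observability
    {n r : ℕ} (V : ℝ → Matrix (Fin n) (Fin r) ℝ)
    (hpc : ∀ i j, PiecewiseContinuous fun t => V t i j)
    (A : ℝ) (hA : 0 < A)
    (hbd : ∀ i j, ∀ᵐ t ∂(volume : Measure ℝ), |V t i j| ≤ A) :
    (∃ γ₁ > (0 : ℝ), ∃ γ₂ > (0 : ℝ), ∀ x : ℝ → Fin n → ℝ,
        (ContinuousOn x (Set.Ici (0 : ℝ)) ∧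
          ∀ t, (0 : ℝ) ≤ t →
            x t = x 0 + ∫ u in (0 : ℝ)..t, (-(V u * (V u)ᵀ)).mulVec (x u)) →
        ∀ s t : ℝ, 0 ≤ s → s ≤ t →
          enorm' (x t) ≤ γ₁ * Real.exp (-γ₂ * (t - s)) * enorm' (x s))
    ↔ (∃ α₁ > (0 : ℝ), ∃ α₂ > (0 : ℝ), ∃ δ > (0 : ℝ), ∀ s : ℝ, 0 ≤ s →
        ((Matrix.of fun i j => ∫ t in s..s + δ, (V t * (V t)ᵀ) i j) -
            α₁ • (1 : Matrix (Fin n) (Fin n) ℝ)).PosSemidef ∧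
        (α₂ • (1 : Matrix (Fin n) (Fin n) ℝ) -
            Matrix.of fun i j => ∫ t in s..s + δ, (V t * (V t)ᵀ) i j).PosSemidef) := by
  constructor
  · rintro ⟨γ₁, hγ₁, γ₂, hγ₂, hstab⟩
    -- With `δ = 2 γ₁ / γ₂` one has `γ₁ exp (-γ₂ δ) ≤ γ₁ / (1 + 2 γ₁) ≤ 1 / 2`.
    have hδ : 0 < 2 * γ₁ / γ₂ := by positivity
    refine ⟨1 / 2, by norm_num, (n * r * A ^ 2 + 1) * (2 * γ₁ / γ₂), by positivity,
      2 * γ₁ / γ₂, hδ, fun s hs => ?_⟩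
    rw [gramian_bounds_iff hpc hbd hs (by positivity)]
    refine fun v => ⟨observable_of_halving hpc hbd hs hδ (fun x hx => ?_) v, ?_⟩
    · refine (hstab x hx s _ hs (by linarith)).trans
        (mul_le_mul_of_nonneg_right ?_ (Real.sqrt_nonneg _))
      have h1 : -γ₂ * (s + 2 * γ₁ / γ₂ - s) = -(2 * γ₁) := by field_simp; ring
      rw [h1, Real.exp_neg, ← div_eq_mul_inv, div_le_iff₀ (Real.exp_pos _)]
      linarith [Real.add_one_le_exp (2 * γ₁)]
    · have := integral_obsForm_le hpc hbd hs (by linarith : s ≤ s + 2 * γ₁ / γ₂) v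
      rwa [add_sub_cancel_left] at this
  · rintro ⟨α₁, hα₁, α₂, -, δ, hδ, hobs⟩
    exact expStable_of_observable hpc hbd hα₁ hδ fun s hs v =>
      ((gramian_bounds_iff hpc hbd hs (by positivity) α₁ α₂).1 (hobs s hs) v).1
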